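/- arXiv:2605.19248 — 8 statements merged into one kernel-verified Lean document; each statement's English description precedes it below -/
import Mathlib

section
/- Let D, E, N be positive integers, let M ∈ Matrix (Fin D) (Fin E) ℂ be nonzero, and let U_1, …, U_N be unitary D×D complex matrices such that the matrices U_i M are pairwise orthogonal under the Hilbert–Schmidt (trace) inner product, i.e., Tr((U_i M)ᴴ (U_j M)) = 0 for all i ≠ j. Then N ≤ D². -/
open Matrix

/-- **Superdense coding bound.**  Let `D, E, N` be positive integers, `M` a nonzero
`D×E` complex matrix, and `U_1, …, U_N` unitary `D×D` complex matrices such that the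
matrices `U_i M` are pairwise orthogonal in the Hilbert–Schmidt inner product, i.e.,
`Tr((U_i M)ᴴ (U_j M)) = 0` for `i ≠ j`.  Then `N ≤ D²`. -/
theorem superdense_coding_bound (D E N : ℕ) (hD : 0 < D) (hE : 0 < E) (hN : 0 < N)
    (M : Matrix (Fin D) (Fin E) ℂ) (hM : M ≠ 0)
    (U : Fin N → Matrix (Fin D) (Fin D) ℂ)
    (hU : ∀ i, (U i)ᴴ * U i = 1)
    (horth : ∀ i j, i ≠ j → Matrix.trace ((U i * M)ᴴ * (U j * M)) = 0) :
    N ≤ D ^ 2 := by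
  have hli : LinearIndependent ℂ U := by
    rw [Fintype.linearIndependent_iff]
    intro c hc i
    have h1 : Matrix.trace ((U i * M)ᴴ * ((∑ j, c j • U j) * M)) = 0 := by
      rw [hc]; simp
    rw [Matrix.sum_mul, Matrix.mul_sum, Matrix.trace_sum, Finset.sum_eq_single i] at h1
    · rw [Matrix.smul_mul, Matrix.mul_smul, Matrix.trace_smul, Matrix.conjTranspose_mul,
        Matrix.mul_assoc, ← Matrix.mul_assoc (U i)ᴴ, hU, Matrix.one_mul, smul_eq_mul] at h1
      rcases mul_eq_zero.mp h1 with h | h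
      · exact h
      · open scoped ComplexOrder in
        exact absurd (Matrix.trace_conjTranspose_mul_self_eq_zero_iff.mp h) hM
    · intro j _ hj
      rw [Matrix.smul_mul, Matrix.mul_smul, Matrix.trace_smul, horth i j hj.symm, smul_zero]
    · intro h
      exact absurd (Finset.mem_univ i) h
  have h := hli.fintype_card_le_finrank
  rw [Module.finrank_matrix] at h
  simpa [sq] using h
end

section
/- Let q be a prime, α ≥ 1, k ≥ 2. Let Γ_{h_1}, …, Γ_{h_k}, Γ_s ∈ F_q^{α×αk} be such that both vertical stacks [Γ_{h_1}; …; Γ_{h_k}] and [Γ_s; Γ_{h_2}; …; Γ_{h_k}] are invertible. Fix d_2*, …, d_k* ∈ F_q^α, and for d ∈ F_q^α let m'(d) be the unique vector with Γ_{h_1} m'(d) = d and Γ_{h_i} m'(d) = d_i* (i ≥ 2). Let D, E be positive integers, Ψ ∈ Matrix (Fin D) (Fin E) ℂ nonzero, and let U : F_q^α → (unitary D×D complex matrices) be an encoding such that Tr((U(d) Ψ)ᴴ (U(d') Ψ)) = 0 whenever Γ_s m'(d) ≠ Γ_s m'(d') (perfect distinguishability of outcomes that the decoder must tell apart). Then q^α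 ≤ D²; in particular, if D = q^β for a natural number β, then 2β ≥ α, i.e., β ≥ ⌈α/2⌉. -/
open Matrix

/-- **Converse via superdense coding (general `α`).**
Let `q` be prime, `α ≥ 1`, `k ≥ 2`, with helper generators `Γ_{h_1}, …, Γ_{h_k}` and
stale generator `Γ_s` such that both the stack `[Γ_{h_1}; …; Γ_{h_k}]` and the stack with
`Γ_{h_1}` replaced by `Γ_s` are invertible.  Fix `d_2*, …, d_k*` and let `φ d = m'(d)` be
the (unique) solution of `Γ_{h_1} m' = d`, `Γ_{h_i} m' = d_i*` (`i ≥ 2`).  If `Ψ` is a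
nonzero `D×E` complex matrix and `U : 𝔽_q^α → U(D)` is a unitary encoding with
`Tr((U(d)Ψ)ᴴ (U(d')Ψ)) = 0` whenever `Γ_s m'(d) ≠ Γ_s m'(d')`, then `q^α ≤ D²`; in
particular if `D = q^β` then `2β ≥ α`, i.e. `β ≥ ⌈α/2⌉`. -/
theorem converse_superdense (q α k D E : ℕ) [Fact q.Prime] [NeZero k]
    (hα : 1 ≤ α) (hk : 2 ≤ k) (hD : 0 < D) (hE : 0 < E)
    (Γ : Fin k → Matrix (Fin α) (Fin (α * k)) (ZMod q))
    (Γs : Matrix (Fin α) (Fin (α * k)) (ZMod q))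
    (hG : ∃ Ginv : Matrix (Fin (α * k)) (Fin k × Fin α) (ZMod q),
        (Matrix.of fun (p : Fin k × Fin α) (c : Fin (α * k)) => Γ p.1 p.2 c) * Ginv = 1 ∧
        Ginv * (Matrix.of fun (p : Fin k × Fin α) (c : Fin (α * k)) => Γ p.1 p.2 c) = 1)
    (hGs : ∃ Ginv : Matrix (Fin (α * k)) (Fin k × Fin α) (ZMod q),
        (Matrix.of fun (p : Fin k × Fin α) (c : Fin (α * k)) =>
          Function.update Γ 0 Γs p.1 p.2 c) * Ginv = 1 ∧
        Ginv * (Matrix.of fun (p : Fin k × Fin α) (c : Fin (α * k)) =>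
          Function.update Γ 0 Γs p.1 p.2 c) = 1)
    (dstar : Fin k → Fin α → ZMod q)
    (φ : (Fin α → ZMod q) → Fin (α * k) → ZMod q)
    (hφ : ∀ d, (Γ 0).mulVec (φ d) = d ∧
        ∀ i : Fin k, i ≠ 0 → (Γ i).mulVec (φ d) = dstar i)
    (Ψ : Matrix (Fin D) (Fin E) ℂ) (hΨ : Ψ ≠ 0)
    (U : (Fin α → ZMod q) → Matrix (Fin D) (Fin D) ℂ)
    (hU : ∀ d, (U d)ᴴ * U d = 1)
    (horth : ∀ d d', Γs.mulVec (φ d) ≠ Γs.mulVec (φ d') →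
        Matrix.trace ((U d * Ψ)ᴴ * (U d' * Ψ)) = 0) :
    q ^ α ≤ D ^ 2 ∧ ∀ β : ℕ, D = q ^ β → α ≤ 2 * β ∧ (α + 1) / 2 ≤ β := by
  classical
  have hinj : ∀ d d', Γs.mulVec (φ d) = Γs.mulVec (φ d') → d = d' := by
    intro d d' h
    obtain ⟨G, -, hG2⟩ := hGs
    have h1 : (Matrix.of fun (p : Fin k × Fin α) (c : Fin (α * k)) =>
          Function.update Γ 0 Γs p.1 p.2 c).mulVec (φ d) =
        (Matrix.of fun (p : Fin k × Fin α) (c : Fin (α * k)) =>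
          Function.update Γ 0 Γs p.1 p.2 c).mulVec (φ d') := by
      funext p
      obtain ⟨i, j⟩ := p
      by_cases hi : i = 0
      · subst hi
        have := congrFun h j
        simpa [Matrix.mulVec, dotProduct] using this
      · have := congrFun (((hφ d).2 i hi).trans ((hφ d').2 i hi).symm) j
        simpa [Matrix.mulVec, dotProduct, Function.update_of_ne hi] using this
    have h2 := congrArg G.mulVec h1
    rw [Matrix.mulVec_mulVec, Matrix.mulVec_mulVec, hG2, Matrix.one_mulVec,
      Matrix.one_mulVec] at h2
    rw [← (hφ d).1, ← (hφ d').1, h2]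
  have hself : ∀ d, Matrix.trace ((U d * Ψ)ᴴ * (U d * Ψ)) ≠ 0 := by
    intro d h
    open scoped ComplexOrder in
    rw [Matrix.trace_conjTranspose_mul_self_eq_zero_iff] at h
    apply hΨ
    calc Ψ = ((U d)ᴴ * U d) * Ψ := by rw [hU, Matrix.one_mul]
      _ = 0 := by rw [Matrix.mul_assoc, h, Matrix.mul_zero]
  have hli : LinearIndependent ℂ U := by
    rw [Fintype.linearIndependent_iff]
    intro g hg d
    have h1 : Matrix.trace ((U d * Ψ)ᴴ * ((∑ e, g e • U e) * Ψ)) = 0 := by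
      rw [hg]; simp
    rw [Matrix.sum_mul, Matrix.mul_sum, Matrix.trace_sum, Finset.sum_eq_single d] at h1
    · rw [Matrix.smul_mul, Matrix.mul_smul, Matrix.trace_smul, smul_eq_mul] at h1
      exact (mul_eq_zero.mp h1).resolve_right (hself d)
    · intro e _ he
      rw [Matrix.smul_mul, Matrix.mul_smul, Matrix.trace_smul,
        horth d e (fun hh => he (hinj d e hh).symm), smul_zero]
    · simp
  have hmain : q ^ α ≤ D ^ 2 := by
    have := hli.fintype_card_le_finrank
    simpa [Module.finrank_matrix, ZMod.card, sq] using this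
  refine ⟨hmain, fun β hβ => ?_⟩
  have : α ≤ 2 * β := by
    rw [hβ, ← pow_mul, mul_comm] at hmain
    exact (Nat.pow_le_pow_iff_right (Fact.out : q.Prime).one_lt).mp hmain
  omega
end

section
/- Let q be a prime, β ≥ 1, k ≥ 2, with q > βk. Let H_Z ∈ F_q^{β×βk} be the Vandermonde matrix with entries H_Z[r, j] = (j+1)^r for r = 0, …, β−1 and j = 0, …, βk−1 (evaluation points 1, 2, …, βk, which are distinct in F_q). For h = 0, …, k−1, let I_h = {hβ, hβ+1, …, (h+1)β−1}. Then for every h, the restriction map π_h : ker(H_Z) → F_q^β sending v to (v_j)_{j ∈ I_h} is surjective. -/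
open Matrix

/-- The `m`-th qudit position of helper `h`: index `h*β + m` in `Fin (β*k)`. -/
def blockIdx {β k : ℕ} (h : Fin k) (m : Fin β) : Fin (β * k) :=
  ⟨h.val * β + m.val, by
    have h1 : h.val + 1 ≤ k := h.isLt
    have h2 : m.val < β := m.isLt
    calc h.val * β + m.val < (h.val + 1) * β := by rw [Nat.succ_mul]; omega
      _ ≤ k * β := Nat.mul_le_mul_right β h1
      _ = β * k := Nat.mul_comm k β⟩

theorem blockIdx_inj_aux {β k : ℕ} {h h' : Fin k} {m m' : Fin β}
    (e : blockIdx h m = blockIdx h' m') : h = h' ∧ m = m' := by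
  have e1 : h.val * β + m.val = h'.val * β + m'.val := congrArg Fin.val e
  have hm := m.isLt
  have hm' := m'.isLt
  have hh : h.val = h'.val := by
    rcases lt_trichotomy h.val h'.val with hl | hl | hl
    · have := Nat.mul_le_mul_right β (Nat.succ_le_of_lt hl)
      rw [Nat.succ_mul] at this
      omega
    · exact hl
    · have := Nat.mul_le_mul_right β (Nat.succ_le_of_lt hl)
      rw [Nat.succ_mul] at this
      omega
  rw [hh] at e1
  exact ⟨Fin.ext hh, Fin.ext (by omega)⟩

/-- **Surjectivity of the block restriction of `ker H_Z` (Step 2 of Theorem 10).**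
Let `q` be prime with `q > βk`, `β ≥ 1`, `k ≥ 2`, and let `H_Z ∈ 𝔽_q^{β×βk}` be the
Vandermonde matrix `H_Z[r,j] = (j+1)^r` (evaluation points `1, …, βk`).  For each helper
`h`, the restriction map `π_h : ker(H_Z) → 𝔽_q^β`, `v ↦ (v_j)_{j ∈ I_h}` with
`I_h = {hβ, …, (h+1)β - 1}`, is surjective. -/
theorem kernel_block_restriction_surjective (q β k : ℕ) [Fact q.Prime]
    (hβ : 1 ≤ β) (hk : 2 ≤ k) (hq : β * k < q) :
    ∀ h : Fin k, ∀ t : Fin β → ZMod q,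
      ∃ v : Fin (β * k) → ZMod q,
        (Matrix.of fun (r : Fin β) (j : Fin (β * k)) =>
            (((j : ℕ) + 1 : ℕ) : ZMod q) ^ (r : ℕ)).mulVec v = 0 ∧
        ∀ m : Fin β, v (blockIdx h m) = t m := by
  intro h t
  obtain ⟨h', hne⟩ : ∃ h' : Fin k, h' ≠ h := by
    have : Nontrivial (Fin k) := Fin.nontrivial_iff_two_le.mpr hk
    exact exists_ne h
  set H : Matrix (Fin β) (Fin (β * k)) (ZMod q) :=
    Matrix.of fun (r : Fin β) (j : Fin (β * k)) =>
            (((j : ℕ) + 1 : ℕ) : ZMod q) ^ (r : ℕ) with hH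
  let p : Fin β → ZMod q := fun m => (((blockIdx h' m : Fin (β * k)) : ℕ) + 1 : ℕ)
  have hp : Function.Injective p := by
    intro a b hab
    have h1 := (ZMod.natCast_eq_natCast_iff' _ _ _).mp hab
    have ha := (blockIdx h' a).isLt
    have hb := (blockIdx h' b).isLt
    rw [Nat.mod_eq_of_lt (by omega), Nat.mod_eq_of_lt (by omega)] at h1
    exact (blockIdx_inj_aux (Fin.ext (Nat.succ_injective h1))).2
  have hdet : IsUnit (Matrix.vandermonde p)ᵀ.det := by
    rw [Matrix.det_transpose]
    exact (Matrix.det_vandermonde_ne_zero_iff.mpr hp).isUnit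
  let w : Fin (β * k) → ZMod q := ∑ m, Pi.single (blockIdx h m) (t m)
  obtain ⟨s, hs⟩ : ∃ s, (Matrix.vandermonde p)ᵀ.mulVec s = - H.mulVec w :=
    ⟨(Matrix.vandermonde p)ᵀ⁻¹.mulVec (- H.mulVec w), by
      rw [Matrix.mulVec_mulVec, Matrix.mul_nonsing_inv _ hdet, Matrix.one_mulVec]⟩
  refine ⟨w + ∑ m, Pi.single (blockIdx h' m) (s m), ?_, ?_⟩
  · have : H.mulVec (∑ m, Pi.single (blockIdx h' m) (s m))
        = (Matrix.vandermonde p)ᵀ.mulVec s := by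
      rw [Matrix.mulVec_sum]
      ext r
      rw [Finset.sum_apply]
      simp only [Matrix.mulVec, dotProduct]
      refine Finset.sum_congr rfl fun m _ => ?_
      simp [hH, p, Matrix.vandermonde_apply, Pi.single_apply]
    rw [Matrix.mulVec_add, this, hs, add_neg_cancel]
  · intro m
    have e1 : w (blockIdx h m) = t m := by
      simp only [w, Finset.sum_apply]
      rw [Finset.sum_eq_single m]
      · simp
      · intro b _ hb
        exact Pi.single_eq_of_ne (fun e => hb (blockIdx_inj_aux e).2.symm) _
      · simp
    rw [Pi.add_apply, e1, Finset.sum_apply, Finset.sum_eq_zero, add_zero]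
    intro b _
    exact Pi.single_eq_of_ne (fun e => hne (blockIdx_inj_aux e).1.symm) _
end

section
/- Let q be a prime, β ≥ 1, k ≥ 2, with q > βk. Let H_Z ∈ F_q^{β×βk} be the Vandermonde matrix with entries H_Z[r, j] = (j+1)^r for r = 0, …, β−1 and j = 0, …, βk−1. For h = 0, …, k−1, let I_h = {hβ, …, (h+1)β−1} and let π_h : ker(H_Z) → F_q^β be the restriction map v ↦ (v_j)_{j ∈ I_h}. Then the kernel of π_h has dimension β(k−2) over F_q, and consequently ker(H_Z) has dimension β(k−1). -/
open Matrix

theorem block_solve_aux (q β k : ℕ) [Fact q.Prime] (hq : β * k < q) (h : Fin k)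
    (s : Fin β → ZMod q) :
    ∃ w : Fin β → ZMod q, Matrix.mulVecLin
        (Matrix.of fun (r : Fin β) (j : Fin (β * k)) =>
          (((j : ℕ) + 1 : ℕ) : ZMod q) ^ (r : ℕ)) (Function.extend (blockIdx h) w 0) = s := by
  have hinj : Function.Injective (blockIdx (β := β) h) := fun a b e => (blockIdx_inj_aux e).2
  let v : Fin β → ZMod q := fun m => (((blockIdx h m : Fin (β * k)) : ℕ) + 1 : ℕ)
  have hv : Function.Injective v := by
    intro a b e
    have e' := (ZMod.natCast_eq_natCast_iff' _ _ _).1 e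
    rw [Nat.mod_eq_of_lt (by have := (blockIdx h a).isLt; omega),
      Nat.mod_eq_of_lt (by have := (blockIdx h b).isLt; omega)] at e'
    exact hinj (Fin.ext (by omega))
  have hdet : IsUnit ((Matrix.vandermonde v)ᵀ).det := by
    rw [Matrix.det_transpose]
    exact (Matrix.det_vandermonde_ne_zero_iff.2 hv).isUnit
  refine ⟨((Matrix.vandermonde v)ᵀ)⁻¹ *ᵥ s, ?_⟩
  have key : ∀ w : Fin β → ZMod q, Matrix.mulVecLin
        (Matrix.of fun (r : Fin β) (j : Fin (β * k)) =>
          (((j : ℕ) + 1 : ℕ) : ZMod q) ^ (r : ℕ)) (Function.extend (blockIdx h) w 0)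
          = (Matrix.vandermonde v)ᵀ *ᵥ w := by
    intro w
    ext r
    simp only [Matrix.mulVecLin_apply, Matrix.mulVec, dotProduct, Matrix.of_apply,
      Matrix.transpose_apply, Matrix.vandermonde_apply]
    symm
    apply Finset.sum_of_injOn (blockIdx h) hinj.injOn (by simp)
    · intro j _ hj
      rw [Function.extend_apply' _ _ _ (by simpa using hj)]
      simp
    · intro m _
      rw [hinj.extend_apply]
  rw [key, Matrix.mulVec_mulVec, Matrix.mul_nonsing_inv _ hdet, Matrix.one_mulVec]

/-- **Dimension count for the block restriction of `ker H_Z`.**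
Let `q` be prime with `q > βk`, `β ≥ 1`, `k ≥ 2`, `H_Z[r,j] = (j+1)^r` the Vandermonde
matrix, and `π_h : ker(H_Z) → 𝔽_q^β` the restriction to the coordinates
`I_h = {hβ, …, (h+1)β - 1}`.  Then `dim ker(π_h) = β(k-2)` for every `h`, and
`dim ker(H_Z) = β(k-1)`. -/
theorem kernel_block_restriction_dims (q β k : ℕ) [Fact q.Prime]
    (hβ : 1 ≤ β) (hk : 2 ≤ k) (hq : β * k < q) :
    (∀ h : Fin k,
      Module.finrank (ZMod q)
        ↥(LinearMap.ker ((LinearMap.funLeft (ZMod q) (ZMod q) (blockIdx h)).comp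
          (LinearMap.ker (Matrix.mulVecLin
            (Matrix.of fun (r : Fin β) (j : Fin (β * k)) =>
              (((j : ℕ) + 1 : ℕ) : ZMod q) ^ (r : ℕ)))).subtype))
        = β * (k - 2)) ∧
    Module.finrank (ZMod q)
      ↥(LinearMap.ker (Matrix.mulVecLin
        (Matrix.of fun (r : Fin β) (j : Fin (β * k)) =>
          (((j : ℕ) + 1 : ℕ) : ZMod q) ^ (r : ℕ))))
      = β * (k - 1) := by
  set H := Matrix.mulVecLin (Matrix.of fun (r : Fin β) (j : Fin (β * k)) =>
          (((j : ℕ) + 1 : ℕ) : ZMod q) ^ (r : ℕ)) with hH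
  have hs : ∀ (h : Fin k) (s : Fin β → ZMod q),
      ∃ w : Fin β → ZMod q, H (Function.extend (blockIdx h) w 0) = s :=
    block_solve_aux q β k hq
  have hHs : LinearMap.range H = ⊤ := LinearMap.range_eq_top.2 fun s => by
    obtain ⟨w, hw⟩ := hs ⟨0, by omega⟩ s
    exact ⟨_, hw⟩
  have hdim : Module.finrank (ZMod q) ↥(LinearMap.ker H) = β * (k - 1) := by
    have := H.finrank_range_add_finrank_ker
    rw [hHs] at this
    simp only [finrank_top, Module.finrank_fin_fun] at this
    rw [Nat.mul_sub]
    omega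
  refine ⟨fun h => ?_, hdim⟩
  have : Nontrivial (Fin k) := Fin.nontrivial_iff_two_le.2 hk
  obtain ⟨h', hh⟩ := exists_ne h
  have hP : LinearMap.range ((LinearMap.funLeft (ZMod q) (ZMod q) (blockIdx h)).comp
      (LinearMap.ker H).subtype) = ⊤ := LinearMap.range_eq_top.2 fun y => by
    obtain ⟨w, hw⟩ := hs h' (-H (Function.extend (blockIdx h) y 0))
    refine ⟨⟨Function.extend (blockIdx h) y 0 + Function.extend (blockIdx h') w 0, ?_⟩, ?_⟩
    · rw [LinearMap.mem_ker, map_add, hw, add_neg_cancel]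
    · ext m
      have hinj : Function.Injective (blockIdx (β := β) h) :=
        fun a b e => (blockIdx_inj_aux e).2
      simp only [LinearMap.comp_apply, Submodule.subtype_apply, LinearMap.funLeft_apply,
        Pi.add_apply]
      rw [hinj.extend_apply, Function.extend_apply' _ _ _
        (fun ⟨a, e⟩ => hh (blockIdx_inj_aux e).1)]
      simp
  have := LinearMap.finrank_range_add_finrank_ker
    ((LinearMap.funLeft (ZMod q) (ZMod q) (blockIdx h)).comp (LinearMap.ker H).subtype)
  rw [hP, hdim] at this
  simp only [finrank_top, Module.finrank_fin_fun] at this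
  rw [Nat.mul_sub] at this ⊢
  omega
end

section
/- Let q be a prime, β ≥ 1, k ≥ 2, with q > βk, and let 1 ≤ r_z ≤ β. Let H_Z ∈ F_q^{β×βk} be the Vandermonde matrix with entries H_Z[r, j] = (j+1)^r for r = 0, …, β−1 and j = 0, …, βk−1, and for h = 0, …, k−1 let I_h = {hβ, …, (h+1)β−1}. Then there exists a matrix H_X ∈ F_q^{r_z×βk} such that H_X H_Zᵀ = 0 and, for every h, the r_z×β submatrix of H_X consisting of the columns indexed by I_h has rank r_z. -/
open Matrix

/-- **Existence of `H_X` with full-rank helper subblocks (Step 2 of Theorem 10).**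
Let `q` be prime with `q > βk`, `β ≥ 1`, `k ≥ 2`, `1 ≤ r_z ≤ β`, and let
`H_Z ∈ 𝔽_q^{β×βk}` be the Vandermonde matrix `H_Z[r,j] = (j+1)^r`.  Then there exists
`H_X ∈ 𝔽_q^{r_z×βk}` with `H_X H_Zᵀ = 0` such that, for every helper `h`, the `r_z×β`
submatrix of `H_X` on the columns `I_h = {hβ, …, (h+1)β - 1}` has rank `r_z`. -/
theorem exists_HX_full_rank_subblocks (q β k r_z : ℕ) [Fact q.Prime]
    (hβ : 1 ≤ β) (hk : 2 ≤ k) (hq : β * k < q) (hrz1 : 1 ≤ r_z) (hrzβ : r_z ≤ β) :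
    ∃ HX : Matrix (Fin r_z) (Fin (β * k)) (ZMod q),
      HX * (Matrix.of fun (r : Fin β) (j : Fin (β * k)) =>
          (((j : ℕ) + 1 : ℕ) : ZMod q) ^ (r : ℕ))ᵀ = 0 ∧
      ∀ h : Fin k, (HX.submatrix id (blockIdx h)).rank = r_z := by
  have hcast : ∀ a b : Fin (β * k), (((a : ℕ) + 1 : ℕ) : ZMod q) = (((b : ℕ) + 1 : ℕ) : ZMod q) → a = b := by
    intro a b hab
    rw [ZMod.natCast_eq_natCast_iff'] at hab
    rw [Nat.mod_eq_of_lt (by omega), Nat.mod_eq_of_lt (by omega)] at hab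
    exact Fin.ext (by omega)
  let x : Fin (β * k) → ZMod q := fun j => (((j : ℕ) + 1 : ℕ) : ZMod q)
  have hx : Function.Injective x := fun a b hab => hcast a b hab
  let w : Fin (β * k) → ZMod q := fun j => (∏ i ∈ Finset.univ.erase j, (x j - x i))⁻¹
  have hw : ∀ j, w j ≠ 0 := by
    intro j
    refine inv_ne_zero (Finset.prod_ne_zero_iff.2 ?_)
    intro i hi
    exact sub_ne_zero.2 (fun e => (Finset.ne_of_mem_erase hi) (hx e).symm)
  have h2 : 2 * β ≤ β * k := by nlinarith
  refine ⟨Matrix.of fun i j => w j * x j ^ (i : ℕ), ?_, ?_⟩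
  · ext i r
    simp only [Matrix.mul_apply, Matrix.of_apply, Matrix.transpose_apply, Matrix.zero_apply]
    have hlt : (i : ℕ) + r < β * k - 1 := by omega
    have := Lagrange.coeff_eq_sum (s := Finset.univ) (v := x) (hx.injOn)
      (P := (Polynomial.X ^ ((i : ℕ) + r) : Polynomial (ZMod q))) (by
        rw [Polynomial.degree_X_pow, Finset.card_univ, Fintype.card_fin]
        exact_mod_cast (by omega))
    rw [Finset.card_univ, Fintype.card_fin, Polynomial.coeff_X_pow, if_neg (by omega)] at this
    rw [this]
    refine Finset.sum_congr rfl fun j _ => ?_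
    rw [Polynomial.eval_pow, Polynomial.eval_X, pow_add, div_eq_mul_inv]
    change w j * x j ^ (i : ℕ) * x j ^ (r : ℕ) = x j ^ (i : ℕ) * x j ^ (r : ℕ) * w j
    ring
  · intro h
    have hinj : Function.Injective (blockIdx (β := β) h) := by
      intro a b hab
      have := congrArg Fin.val hab
      simp only [blockIdx] at this
      exact Fin.ext (by omega)
    let N : Matrix (Fin β) (Fin β) (ZMod q) :=
      (Matrix.vandermonde (fun m => x (blockIdx h m)))ᵀ * Matrix.diagonal (fun m => w (blockIdx h m))
    have hdet : N.det ≠ 0 := by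
      simp only [N, Matrix.det_mul, Matrix.det_transpose, Matrix.det_diagonal]
      exact mul_ne_zero (Matrix.det_vandermonde_ne_zero_iff.2 (hx.comp hinj))
        (Finset.prod_ne_zero_iff.2 fun m _ => hw _)
    have hli : LinearIndependent (ZMod q) N.row := Matrix.linearIndependent_rows_of_det_ne_zero hdet
    have hli2 := hli.comp (Fin.castLE hrzβ) (Fin.castLE_injective hrzβ)
    have key : LinearIndependent (ZMod q) ((Matrix.of fun (i : Fin r_z) j => w j * x j ^ (i : ℕ)).submatrix id (blockIdx h)).row := by
      convert hli2 using 1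
      ext i m
      change w (blockIdx h m) * x (blockIdx h m) ^ (i : ℕ) = N (Fin.castLE hrzβ i) m
      simp only [N, Matrix.mul_diagonal, Matrix.vandermonde_apply, Matrix.transpose_apply,
        Fin.val_castLE]
      ring
    rw [key.rank_matrix, Fintype.card_fin]
end

section
/- Let q be a prime, β ≥ 1, k ≥ 2, with q > βk, and let 1 ≤ r_z ≤ β. Let H_Z ∈ F_q^{β×βk} be the Vandermonde matrix with entries H_Z[r, j] = (j+1)^r, and for h = 0, …, k−1 let I_h = {hβ, …, (h+1)β−1}. Let N = β(k−1) (the dimension of ker(H_Z)). Among the q^{r_z N} matrices H_X ∈ F_q^{r_z×βk} all of whose rows lie in ker(H_Z), the number of matrices for which some block submatrix H_X restricted to columns I_h fails to have rank r_z is at most k · r_z · q^{r_z N − 1}. -/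
open Matrix

lemma blc_block_surj {β k : ℕ} (j : Fin (β * k)) :
    ∃ (b : Fin k) (m : Fin β), blockIdx b m = j := by
  have hβ : 0 < β := by
    rcases Nat.eq_zero_or_pos β with h | h
    · subst h; exact absurd j.isLt (by simp)
    · exact h
  refine ⟨⟨j.val / β, ?_⟩, ⟨j.val % β, Nat.mod_lt _ hβ⟩, ?_⟩
  · exact Nat.div_lt_of_lt_mul j.isLt
  · apply Fin.ext
    simp only [blockIdx]
    exact Nat.div_add_mod' _ _

lemma blc_block_inj {β k : ℕ} (b : Fin k) : Function.Injective (blockIdx (β := β) b) := by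
  intro m m' h
  have := congrArg Fin.val h
  simp only [blockIdx] at this
  exact Fin.ext (by omega)

/-- A kernel vector supported on one block vanishes. -/
lemma blc_ker_zero (q β k : ℕ) [Fact q.Prime] (hq : β * k < q) (b₀ : Fin k)
    (v : Fin (β * k) → ZMod q)
    (hv : (Matrix.of fun (r : Fin β) (j : Fin (β * k)) =>
            (((j : ℕ) + 1 : ℕ) : ZMod q) ^ (r : ℕ)).mulVec v = 0)
    (h0 : ∀ b m, b ≠ b₀ → v (blockIdx b m) = 0) : v = 0 := by
  have hx : Function.Injective
      (fun m : Fin β => ((((blockIdx b₀ m : Fin (β * k)) : ℕ) + 1 : ℕ) : ZMod q)) := by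
    intro m m' h
    have h1 : ((blockIdx b₀ m : Fin (β * k)) : ℕ) + 1 = ((blockIdx b₀ m' : Fin (β * k)) : ℕ) + 1 := by
      have h2 := (ZMod.natCast_eq_natCast_iff' _ _ _).1 h
      rwa [Nat.mod_eq_of_lt, Nat.mod_eq_of_lt] at h2
      · have := (blockIdx b₀ m').isLt; omega
      · have := (blockIdx b₀ m).isLt; omega
    exact blc_block_inj b₀ (Fin.ext (by omega))
  have hdet := Matrix.det_vandermonde_ne_zero_iff.2 hx
  have hw : (fun m => v (blockIdx b₀ m)) = 0 := by
    apply Matrix.eq_zero_of_vecMul_eq_zero hdet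
    funext r
    have h1 := congrFun hv r
    simp only [Matrix.mulVec, dotProduct, Matrix.of_apply, Pi.zero_apply] at h1
    simp only [Matrix.vecMul, dotProduct, Matrix.vandermonde_apply, Pi.zero_apply]
    rw [← h1]
    symm
    rw [← Finset.sum_subset (Finset.subset_univ (Finset.univ.map ⟨_, blc_block_inj b₀⟩))]
    · rw [Finset.sum_map]
      exact Finset.sum_congr rfl fun m _ => mul_comm _ _
    · intro j _ hj
      obtain ⟨b, m, rfl⟩ := blc_block_surj j
      by_cases hb : b = b₀
      · subst hb; simp at hj
      · rw [h0 b m hb, mul_zero]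
  funext j
  obtain ⟨b, m, rfl⟩ := blc_block_surj j
  by_cases hb : b = b₀
  · subst hb; exact congrFun hw m
  · exact h0 b m hb

/-- Count of kernel matrices satisfying one fixed linear relation on block `h`. -/
lemma blc_count (q β k n : ℕ) [Fact q.Prime] (hk : 2 ≤ k) (hq : β * k < q)
    (h : Fin k) (i : Fin (n + 1)) (c : Fin n → ZMod q) :
    Nat.card {HX : Matrix (Fin (n + 1)) (Fin (β * k)) (ZMod q) //
        (∀ i : Fin (n + 1),
          (Matrix.of fun (r : Fin β) (j : Fin (β * k)) =>
            (((j : ℕ) + 1 : ℕ) : ZMod q) ^ (r : ℕ)).mulVec (HX i) = 0) ∧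
        ∀ m : Fin β, HX i (blockIdx h m) = ∑ j, c j * HX (i.succAbove j) (blockIdx h m)}
      ≤ q ^ (n * ((k - 1) * β) + (k - 2) * β) := by
  obtain ⟨b₀, hb₀⟩ : ∃ b₀ : Fin k, b₀ ≠ h := by
    haveI : Nontrivial (Fin k) := Fin.nontrivial_iff_two_le.2 hk
    exact exists_ne h
  set S := {HX : Matrix (Fin (n + 1)) (Fin (β * k)) (ZMod q) //
        (∀ i : Fin (n + 1),
          (Matrix.of fun (r : Fin β) (j : Fin (β * k)) =>
            (((j : ℕ) + 1 : ℕ) : ZMod q) ^ (r : ℕ)).mulVec (HX i) = 0) ∧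
        ∀ m : Fin β, HX i (blockIdx h m) = ∑ j, c j * HX (i.succAbove j) (blockIdx h m)} with hS
  let f : S → (Fin n × {b : Fin k // b ≠ b₀} × Fin β → ZMod q) ×
      ({b : Fin k // b ∉ ({b₀, h} : Finset (Fin k))} × Fin β → ZMod q) := fun X =>
    (fun p => X.1 (i.succAbove p.1) (blockIdx p.2.1 p.2.2), fun p => X.1 i (blockIdx p.1 p.2))
  have hf : Function.Injective f := by
    intro X Y hXY
    have h1 := congrArg Prod.fst hXY
    have h2 := congrArg Prod.snd hXY
    have key : ∀ j, X.1 (i.succAbove j) = Y.1 (i.succAbove j) := by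
      intro j
      rw [← sub_eq_zero]
      apply blc_ker_zero q β k hq b₀
      · rw [Matrix.mulVec_sub, X.2.1, Y.2.1, sub_zero]
      · intro b m hb
        have := congrFun h1 (j, ⟨b, hb⟩, m)
        simpa [sub_eq_zero] using this
    have key2 : X.1 i = Y.1 i := by
      rw [← sub_eq_zero]
      apply blc_ker_zero q β k hq b₀
      · rw [Matrix.mulVec_sub, X.2.1, Y.2.1, sub_zero]
      · intro b m hb
        rw [Pi.sub_apply, sub_eq_zero]
        by_cases hbh : b = h
        · subst hbh
          rw [X.2.2, Y.2.2]
          simp only [key]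
        · exact congrFun h2 (⟨b, by simp [hb, hbh]⟩, m)
    apply Subtype.ext
    funext j
    rcases Fin.eq_self_or_eq_succAbove i j with rfl | ⟨j', rfl⟩
    · exact key2
    · exact key j'
  refine (Nat.card_le_card_of_injective f hf).trans (le_of_eq ?_)
  have c1 : Fintype.card {b : Fin k // b ≠ b₀} = k - 1 := by
    rw [Fintype.card_subtype_compl]; simp
  have c2 : Fintype.card {b : Fin k // b ∉ ({b₀, h} : Finset (Fin k))} = k - 2 := by
    rw [Fintype.card_subtype_compl, Fintype.card_coe, Finset.card_pair hb₀]; simp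
  rw [Nat.card_eq_fintype_card, Fintype.card_prod, Fintype.card_fun, Fintype.card_fun,
    Fintype.card_prod, Fintype.card_prod, Fintype.card_prod, c1, c2, ZMod.card, Fintype.card_fin,
    Fintype.card_fin, pow_add]

/-- A matrix without full row rank has a row that is a combination of the others. -/
lemma blc_rank {q β n : ℕ} [Fact q.Prime] (M : Matrix (Fin (n + 1)) (Fin β) (ZMod q))
    (hM : M.rank ≠ n + 1) :
    ∃ (i : Fin (n + 1)) (c : Fin n → ZMod q), ∀ m, M i m = ∑ j, c j * M (i.succAbove j) m := by
  have hli : ¬ LinearIndependent (ZMod q) M.row := by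
    intro hl
    apply hM
    simpa using hl.rank_matrix
  rw [Fintype.not_linearIndependent_iff] at hli
  obtain ⟨g, hg, i, hi⟩ := hli
  refine ⟨i, fun j => - (g i)⁻¹ * g (i.succAbove j), fun m => ?_⟩
  have h1 := congrFun hg m
  rw [Fin.sum_univ_succAbove _ i] at h1
  simp only [Pi.add_apply, Pi.smul_apply, Finset.sum_apply, smul_eq_mul, Matrix.row_apply,
    Pi.zero_apply] at h1
  simp only [mul_assoc]
  rw [← Finset.mul_sum, ← neg_eq_of_add_eq_zero_right h1]
  field_simp

/-- **Schwartz–Zippel union bound on the bad locus.**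
Let `q` be prime with `q > βk`, `β ≥ 1`, `k ≥ 2`, `1 ≤ r_z ≤ β`, and let
`H_Z[r,j] = (j+1)^r` be the Vandermonde matrix, with `N = β(k-1) = dim ker(H_Z)`.
Among the matrices `H_X ∈ 𝔽_q^{r_z×βk}` all of whose rows lie in `ker(H_Z)`, the number
of matrices for which some helper-subblock (columns `I_h = {hβ, …, (h+1)β - 1}`) fails to
have rank `r_z` is at most `k · r_z · q^{r_z N - 1}`. -/
theorem bad_locus_count (q β k r_z : ℕ) [Fact q.Prime]
    (hβ : 1 ≤ β) (hk : 2 ≤ k) (hq : β * k < q) (hrz1 : 1 ≤ r_z) (hrzβ : r_z ≤ β) :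
    Nat.card {HX : Matrix (Fin r_z) (Fin (β * k)) (ZMod q) //
        (∀ i : Fin r_z,
          (Matrix.of fun (r : Fin β) (j : Fin (β * k)) =>
            (((j : ℕ) + 1 : ℕ) : ZMod q) ^ (r : ℕ)).mulVec (HX i) = 0) ∧
        ∃ h : Fin k, (HX.submatrix id (blockIdx h)).rank ≠ r_z}
      ≤ k * r_z * q ^ (r_z * (β * (k - 1)) - 1) := by
  classical
  obtain ⟨n, rfl⟩ : ∃ n, r_z = n + 1 := ⟨r_z - 1, by omega⟩
  set P : Matrix (Fin (n + 1)) (Fin (β * k)) (ZMod q) → Prop := fun HX =>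
    ∀ i : Fin (n + 1), (Matrix.of fun (r : Fin β) (j : Fin (β * k)) =>
            (((j : ℕ) + 1 : ℕ) : ZMod q) ^ (r : ℕ)).mulVec (HX i) = 0 with hP
  let V : Fin k × Fin (n + 1) × (Fin n → ZMod q) →
      Finset (Matrix (Fin (n + 1)) (Fin (β * k)) (ZMod q)) := fun t =>
    Finset.univ.filter fun HX => P HX ∧ ∀ m : Fin β, HX t.2.1 (blockIdx t.1 m) =
      ∑ j, t.2.2 j * HX (t.2.1.succAbove j) (blockIdx t.1 m)
  have hV : ∀ t ∈ Finset.univ, (V t).card ≤ q ^ (n * ((k - 1) * β) + (k - 2) * β) := by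
    intro t _
    have := blc_count q β k n hk hq t.1 t.2.1 t.2.2
    rw [Nat.card_eq_fintype_card, Fintype.card_subtype] at this
    exact this
  have hU := Finset.card_biUnion_le_card_mul Finset.univ V _ hV
  rw [Nat.card_eq_fintype_card, Fintype.card_subtype]
  refine (Finset.card_le_card (t := Finset.univ.biUnion V) ?_).trans (hU.trans ?_)
  · intro HX hHX
    obtain ⟨h1, h, h2⟩ := (Finset.mem_filter.1 hHX).2
    obtain ⟨i, c, hc⟩ := blc_rank _ h2
    exact Finset.mem_biUnion.2 ⟨(h, i, c), Finset.mem_univ _,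
      Finset.mem_filter.2 ⟨Finset.mem_univ _, h1, hc⟩⟩
  · rw [Finset.card_univ, Fintype.card_prod, Fintype.card_prod, Fintype.card_fun, ZMod.card,
      Fintype.card_fin, Fintype.card_fin, Fintype.card_fin, ← mul_assoc, mul_assoc, ← pow_add]
    apply Nat.mul_le_mul_left
    apply Nat.pow_le_pow_right (Fact.out : q.Prime).pos
    obtain ⟨l, rfl⟩ : ∃ l, k = l + 2 := ⟨k - 2, by omega⟩
    have e1 : l + 2 - 1 = l + 1 := by omega
    have e2 : l + 2 - 2 = l := by omega
    rw [e1, e2]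
    have e3 : (n + 1) * (β * (l + 1)) = n * ((l + 1) * β) + l * β + β := by ring
    omega
end

section
/- Let q be a prime, β ≥ 1, k ≥ 2, 1 ≤ r_z ≤ β, and set n_q = βk; assume q > n_q. For j = 1, …, n_q define w_j = Π_{1 ≤ m ≤ n_q, m ≠ j} (j − m) ∈ F_q (nonzero since the points 1, …, n_q are distinct in F_q). Define H_X ∈ F_q^{r_z×n_q} by H_X[i, j−1] = j^i / w_j for i = 0, …, r_z−1, and let H_Z ∈ F_q^{β×n_q} be the Vandermonde matrix H_Z[r, j−1] = j^r for r = 0, …, β−1. Then: (a) H_X H_Zᵀ = 0; and (b) for every h = 0, …, k−1, the r_z×β submatrix of H_X on the columns I_h = {hβ, …, (h+1)β−1} has rank r_z. -/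
open Matrix

/-- **Explicit `H_X` construction (Remark 3 of the paper).**
Let `q` be prime, `β ≥ 1`, `k ≥ 2`, `1 ≤ r_z ≤ β`, `n_q = βk`, `q > n_q`.  With
`w_j = ∏_{m ≠ j} (j - m)` over the points `1, …, n_q` of `𝔽_q`, define
`H_X[i, j-1] = j^i / w_j` and the Vandermonde `H_Z[r, j-1] = j^r`.  Then
(a) `H_X H_Zᵀ = 0`, and (b) for every helper `h`, the `r_z×β` submatrix of `H_X` on the
columns `I_h = {hβ, …, (h+1)β - 1}` has rank `r_z`. -/
theorem explicit_HX_construction (q β k r_z : ℕ) [Fact q.Prime]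
    (hβ : 1 ≤ β) (hk : 2 ≤ k) (hrz1 : 1 ≤ r_z) (hrzβ : r_z ≤ β) (hq : β * k < q) :
    let w : Fin (β * k) → ZMod q := fun j =>
      ∏ m ∈ Finset.univ.erase j,
        ((((j : ℕ) + 1 : ℕ) : ZMod q) - (((m : ℕ) + 1 : ℕ) : ZMod q))
    let HX : Matrix (Fin r_z) (Fin (β * k)) (ZMod q) :=
      Matrix.of fun i j => (((j : ℕ) + 1 : ℕ) : ZMod q) ^ (i : ℕ) / w j
    let HZ : Matrix (Fin β) (Fin (β * k)) (ZMod q) :=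
      Matrix.of fun r j => (((j : ℕ) + 1 : ℕ) : ZMod q) ^ (r : ℕ)
    HX * HZᵀ = 0 ∧ ∀ h : Fin k, (HX.submatrix id (blockIdx h)).rank = r_z := by
  intro w HX HZ
  have hinj : Function.Injective
      (fun j : Fin (β * k) => (((j : ℕ) + 1 : ℕ) : ZMod q)) := by
    intro a b hab
    have ha := a.isLt
    have hb := b.isLt
    have h1 := (ZMod.natCast_eq_natCast_iff' _ _ _).mp hab
    rw [Nat.mod_eq_of_lt (by omega), Nat.mod_eq_of_lt (by omega)] at h1
    ext
    omega
  have hw : ∀ j, w j ≠ 0 := by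
    intro j
    refine Finset.prod_ne_zero_iff.mpr ?_
    intro m hm
    exact sub_ne_zero.mpr fun h => (Finset.ne_of_mem_erase hm) (hinj h).symm
  constructor
  · ext i r
    have hle : β * 2 ≤ β * k := Nat.mul_le_mul_left β hk
    have hi := i.isLt
    have hr := r.isLt
    have hcard : (Finset.univ : Finset (Fin (β * k))).card = β * k := by simp
    have h := Lagrange.coeff_eq_sum (s := (Finset.univ : Finset (Fin (β * k))))
      (v := fun j : Fin (β * k) => (((j : ℕ) + 1 : ℕ) : ZMod q)) hinj.injOn
      (P := (Polynomial.X : Polynomial (ZMod q)) ^ ((i : ℕ) + (r : ℕ)))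
      (by rw [Polynomial.degree_X_pow, hcard]; exact_mod_cast (by omega))
    rw [Polynomial.coeff_X_pow, if_neg (by rw [hcard]; omega)] at h
    rw [Matrix.mul_apply, Matrix.zero_apply, h]
    refine Finset.sum_congr rfl fun j _ => ?_
    simp only [HX, HZ, w, Matrix.transpose_apply, Matrix.of_apply, Polynomial.eval_pow,
      Polynomial.eval_X]
    rw [pow_add]
    ring
  · intro h
    have hli : LinearIndependent (ZMod q) (HX.submatrix id (blockIdx h)).row := by
      rw [Fintype.linearIndependent_iff]
      intro g hg
      have hg0 : g = 0 := by
        refine Matrix.eq_zero_of_forall_index_sum_pow_mul_eq_zero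
          (f := fun m : Fin r_z =>
            ((((blockIdx h (Fin.castLE hrzβ m) : Fin (β * k)) : ℕ) + 1 : ℕ) : ZMod q)) ?_ ?_
        · intro a b hab
          have h1 := congrArg Fin.val (hinj hab)
          simp only [blockIdx, Fin.val_castLE] at h1
          ext
          omega
        · intro m
          have h1 := congrFun hg (Fin.castLE hrzβ m)
          simp only [Finset.sum_apply, Pi.smul_apply, Matrix.row_apply, Matrix.submatrix_apply,
            HX, Matrix.of_apply, id, smul_eq_mul, Pi.zero_apply, mul_div_assoc'] at h1
          rw [← Finset.sum_div, div_eq_zero_iff] at h1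
          have h2 := h1.resolve_right (hw _)
          rw [← h2]
          exact Finset.sum_congr rfl fun j _ => mul_comm _ _
      exact fun i => congrFun hg0 i
    simpa using hli.rank_matrix
end

section
/- Let q be a prime, α ≥ 1, k ≥ 2. Let Γ_{h_1}, …, Γ_{h_k}, Γ_s ∈ F_q^{α×αk} be such that the vertical stack [Γ_{h_1}; …; Γ_{h_k}] is invertible and, for every i ∈ {1, …, k}, the vertical stack obtained by replacing Γ_{h_i} with Γ_s (i.e., [Γ_s; (Γ_{h_j})_{j ≠ i}]) is invertible. Let S_1, …, S_k be finite sets, let f_i : F_q^α → S_i be encoding functions, and let g : S_1 × ⋯ × S_k → F_q^α be a decoder satisfying g(f_1(Γ_{h_1} m'), …, f_k(Γ_{h_k} m')) = Γ_s m' for every m' ∈ F_q^{αk}. Then |S_i| ≥ q^α for every i ∈ {1, …, k}. -/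
open Matrix

/-- **Classical lower bound (Nakkiran–Shah–Rashmi style, general `α`).**
Let `q` be prime, `α ≥ 1`, `k ≥ 2`.  Let `Γ_{h_1}, …, Γ_{h_k}, Γ_s ∈ 𝔽_q^{α×αk}` be such
that the vertical stack `[Γ_{h_1}; …; Γ_{h_k}]` is invertible and, for every `i`, the
stack obtained by replacing `Γ_{h_i}` with `Γ_s` is invertible (all witnessed by
two-sided inverses).  If encoders `f_i : 𝔽_q^α → S_i` into finite sets and a decoder `g`
satisfy `g(f_1(Γ_{h_1} m'), …, f_k(Γ_{h_k} m')) = Γ_s m'` for every `m'`, then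
`|S_i| ≥ q^α` for every `i`. -/
theorem classical_lower_bound (q α k : ℕ) [Fact q.Prime] (hα : 1 ≤ α) (hk : 2 ≤ k)
    (Γ : Fin k → Matrix (Fin α) (Fin (α * k)) (ZMod q))
    (Γs : Matrix (Fin α) (Fin (α * k)) (ZMod q))
    (hG : ∃ Ginv : Matrix (Fin (α * k)) (Fin k × Fin α) (ZMod q),
        (Matrix.of fun (p : Fin k × Fin α) (c : Fin (α * k)) => Γ p.1 p.2 c) * Ginv = 1 ∧
        Ginv * (Matrix.of fun (p : Fin k × Fin α) (c : Fin (α * k)) => Γ p.1 p.2 c) = 1)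
    (hGs : ∀ i : Fin k, ∃ Ginv : Matrix (Fin (α * k)) (Fin k × Fin α) (ZMod q),
        (Matrix.of fun (p : Fin k × Fin α) (c : Fin (α * k)) =>
          Function.update Γ i Γs p.1 p.2 c) * Ginv = 1 ∧
        Ginv * (Matrix.of fun (p : Fin k × Fin α) (c : Fin (α * k)) =>
          Function.update Γ i Γs p.1 p.2 c) = 1)
    (S : Fin k → Type*) [∀ i, Fintype (S i)]
    (f : ∀ i : Fin k, (Fin α → ZMod q) → S i)
    (g : (∀ i : Fin k, S i) → (Fin α → ZMod q))
    (hg : ∀ m' : Fin (α * k) → ZMod q,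
        g (fun i => f i ((Γ i).mulVec m')) = Γs.mulVec m') :
    ∀ i : Fin k, q ^ α ≤ Fintype.card (S i) := by
  intro i
  obtain ⟨Ginv, h1, -⟩ := hGs i
  let v : (Fin α → ZMod q) → (Fin k × Fin α → ZMod q) :=
    fun x p => if p.1 = i then x p.2 else 0
  let m : (Fin α → ZMod q) → (Fin (α * k) → ZMod q) := fun x => Ginv.mulVec (v x)
  have key : ∀ x (j : Fin k) (a : Fin α),
      ((Function.update Γ i Γs j).mulVec (m x)) a = v x (j, a) := by
    intro x j a
    have h := congrFun (congrArg (fun M => M.mulVec (v x)) h1) (j, a)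
    simp only [← Matrix.mulVec_mulVec, Matrix.one_mulVec] at h
    exact h
  have hs : ∀ x, Γs.mulVec (m x) = x := by
    intro x
    funext a
    have h := key x i a
    simpa [v] using h
  have hj : ∀ x (j : Fin k), j ≠ i → (Γ j).mulVec (m x) = 0 := by
    intro x j hne
    funext a
    have h := key x j a
    simpa [v, hne] using h
  have hinj : Function.Injective (fun x => f i ((Γ i).mulVec (m x))) := by
    intro x y hxy
    rw [← hs x, ← hs y, ← hg, ← hg]
    congr 1
    funext j
    by_cases hji : j = i
    · subst hji
      exact hxy
    · rw [hj x j hji, hj y j hji]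
  have hc := Fintype.card_le_of_injective _ hinj
  simpa [ZMod.card] using hc
end
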